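/- Let n be a positive integer with n = 6 or n ≥ 8. Then: (a) every zero-sum free sequence T : Fin ℓ → ZMod n with ℓ ≥ ⌊n/2⌋ + 1 is signed g-smooth for some g ∈ ZMod n of additive order n; and (b) there exists a zero-sum free sequence T : Fin ⌊n/2⌋ → ZMod n that is not signed g-smooth for any g ∈ ZMod n of additive order n. Equivalently, the invariant Sgn(ZMod n), defined as the least ℓ₀ such that every zero-sum free sequence of length at least ℓ₀ over ZMod n is signed g-smooth for some g of additive order n, equals ⌈(n+1)/2⌉. -/

import Mathlib

/-!
Part (a) is the Savchev–Chen structure theorem, and all signs can be taken to be `1`.  Write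
`Σ(s)` for the set of sums of all subsequences of `s`, the empty one included.  The claim proved
(`smooth_of_card_lt`) is that in any finite abelian group a zero-sum free sequence `s` with
`|Σ(s)| < 2|s|` is `g`-smooth for some `g`.  The proof is by induction on `|s|`.

* If some `s ∖ a` satisfies the same bound, it is `g`-smooth, so `Σ(s ∖ a) = {0, g, …, M g}` with
  `M ≥ |s| - 1`.  Either `a = x g` with `1 ≤ x ≤ M`, and then zero-sum freeness gives
  `M + x < ord g` and `s` is `g`-smooth; or `Σ(s ∖ a)` and `a + Σ(s ∖ a)` are disjoint and
  `|Σ(s)| ≥ 2(M + 1) ≥ 2|s|` (`smooth_insert`).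
* Otherwise `|Σ(s ∖ a)| ≥ |Σ(s)| - 1` for each `a`.  The total sum `σ` of `s` never lies in
  `Σ(s ∖ a)`, so `Σ(s ∖ a) = D := Σ(s) ∖ {σ}` does not depend on `a`.  As `D = (σ - a) - D` for all
  `a`, each difference `h = a - b` is a period of `D`, hence of `D ∪ {σ} = D ∪ (D + a)`, which
  forces `h = 0`.  So all terms are equal and `s` is smooth (`const_of_card`).

If `ℓ > n / 2` then `|Σ| ≤ n < 2ℓ`, and the order of `g` is a divisor of `n` exceeding `n / 2`.

Part (b) is witnessed by `(k, k + 1, 1, …, 1)` for `n = 2k`, by `(3, 3, 2, …, 2)` for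
`n = 2k + 1 ≥ 11`, and by `(3, 3, 1, 4)` for `n = 9`: the coefficients `mᵢ` of a signed smooth
representation would have sum at least `n`, or force two distinct terms to be equal up to sign.
-/

/-- A nonempty sequence of positive integers is `1`-smooth if the set of sums of its
nonempty subsequences equals the integer interval `[1, total sum]`. -/
def IsOneSmooth {ℓ : ℕ} (T : Fin ℓ → ℤ) : Prop :=
  {s : ℤ | ∃ S : Finset (Fin ℓ), S.Nonempty ∧ ∑ i ∈ S, T i = s} = Set.Icc 1 (∑ i, T i)

/-- A sequence over `ZMod n` is zero-sum free if no nonempty subsequence sums to `0`. -/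
def ZeroSumFree {n ℓ : ℕ} (T : Fin ℓ → ZMod n) : Prop :=
  ∀ S : Finset (Fin ℓ), S.Nonempty → ∑ i ∈ S, T i ≠ 0

/-- A sequence over `ZMod n` is `g`-smooth if its terms are `mᵢ • g` for positive
integers `mᵢ` with `∑ mᵢ < n` such that the integer sequence `(mᵢ)` is `1`-smooth. -/
def IsGSmooth {n ℓ : ℕ} (g : ZMod n) (T : Fin ℓ → ZMod n) : Prop :=
  ∃ m : Fin ℓ → ℤ, (∀ i, 1 ≤ m i) ∧ (∀ i, T i = m i • g) ∧
    (∑ i, m i) < (n : ℤ) ∧ IsOneSmooth m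

/-- A sequence over `ZMod n` is signed `g`-smooth if after multiplying each term by a
sign `±1` it becomes `g`-smooth. -/
def IsSignedGSmooth {n ℓ : ℕ} (g : ZMod n) (T : Fin ℓ → ZMod n) : Prop :=
  ∃ ε : Fin ℓ → ℤ, (∀ i, ε i = 1 ∨ ε i = -1) ∧ IsGSmooth g (fun i => ε i • T i)

/-! ### Subsequence sums and the Savchev–Chen theorem -/

section SavchevChen

variable {ι G : Type*} [AddCommGroup G]

/-- The set of sums of all subsequences of `(f i)_{i ∈ s}`, including the empty one. -/
def subSums [DecidableEq G] (f : ι → G) (s : Finset ι) : Finset G :=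
  s.powerset.image fun t => ∑ i ∈ t, f i

/-- Zero-sum freeness of the subsequence of `f` indexed by `s`. -/
def ZFOn (f : ι → G) (s : Finset ι) : Prop :=
  ∀ t ⊆ s, t.Nonempty → ∑ i ∈ t, f i ≠ 0

/-- `g`-smoothness, for some `g`, of the subsequence of `f` indexed by `s`: the coefficients `m i`
are natural numbers and every integer in `[0, ∑ m i]` is a subsequence sum of them. -/
def SmoothOn (f : ι → G) (s : Finset ι) : Prop :=
  ∃ (g : G) (m : ι → ℕ), (∀ i ∈ s, 1 ≤ m i ∧ f i = m i • g) ∧ ∑ i ∈ s, m i < addOrderOf g ∧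
    ∀ k ≤ ∑ i ∈ s, m i, ∃ t ⊆ s, ∑ i ∈ t, m i = k

lemma mem_subSums [DecidableEq G] {f : ι → G} {s : Finset ι} {x : G} :
    x ∈ subSums f s ↔ ∃ t ⊆ s, ∑ i ∈ t, f i = x := by
  simp [subSums]

lemma subSums_mono [DecidableEq G] {f : ι → G} {s t : Finset ι} (h : s ⊆ t) :
    subSums f s ⊆ subSums f t := by
  intro x hx
  obtain ⟨u, hu, rfl⟩ := mem_subSums.1 hx
  exact mem_subSums.2 ⟨u, hu.trans h, rfl⟩

lemma sub_mem_subSums [DecidableEq G] {f : ι → G} {s : Finset ι} {x : G} (hx : x ∈ subSums f s) :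
    ∑ i ∈ s, f i - x ∈ subSums f s := by
  classical
  obtain ⟨u, hu, rfl⟩ := mem_subSums.1 hx
  refine mem_subSums.2 ⟨s \ u, Finset.sdiff_subset, ?_⟩
  rw [← Finset.sum_sdiff hu]
  abel

lemma add_mem_subSums [DecidableEq ι] [DecidableEq G] {f : ι → G} {s : Finset ι}
    {a : ι} (ha : a ∈ s) {x : G}
    (hx : x ∈ subSums f (s.erase a)) : x + f a ∈ subSums f s := by
  obtain ⟨u, hu, rfl⟩ := mem_subSums.1 hx
  have hau : a ∉ u := fun h => by simpa using hu h
  refine mem_subSums.2 ⟨insert a u, ?_, ?_⟩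
  · exact Finset.insert_subset ha (hu.trans (Finset.erase_subset _ _))
  · rw [Finset.sum_insert hau, add_comm]

lemma mem_subSums_cases [DecidableEq ι] [DecidableEq G] {f : ι → G} {s : Finset ι}
    (a : ι) {x : G} (hx : x ∈ subSums f s) :
    x ∈ subSums f (s.erase a) ∨ x - f a ∈ subSums f (s.erase a) := by
  obtain ⟨u, hu, rfl⟩ := mem_subSums.1 hx
  by_cases hau : a ∈ u
  · right
    refine mem_subSums.2 ⟨u.erase a, Finset.erase_subset_erase _ hu, ?_⟩
    rw [← Finset.add_sum_erase u f hau]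
    abel
  · left
    exact mem_subSums.2 ⟨u, Finset.subset_erase.2 ⟨hu, hau⟩, rfl⟩

lemma total_notMem [DecidableEq ι] [DecidableEq G] {f : ι → G} {s : Finset ι}
    (hs : ZFOn f s) {a : ι} (ha : a ∈ s) :
    ∑ i ∈ s, f i ∉ subSums f (s.erase a) := by
  intro h
  obtain ⟨u, hu, hsum⟩ := mem_subSums.1 h
  have hus := hu.trans (Finset.erase_subset _ _)
  refine hs (s \ u) Finset.sdiff_subset ⟨a, ?_⟩ ?_
  · exact Finset.mem_sdiff.2 ⟨ha, fun h => by simpa using hu h⟩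
  · rw [← Finset.sum_sdiff hus] at hsum
    simpa using hsum

/-- If deleting any single term loses at most one subsequence sum, then all terms are equal:
`subSums f (s.erase a)` is then the same set `D` for all `a`, and differences of terms are
periods both of `D` and of `D` with the total sum adjoined. -/
lemma const_of_card [DecidableEq ι] [DecidableEq G] {f : ι → G} {s : Finset ι} (hs : ZFOn f s)
    (h : ∀ a ∈ s, (subSums f s).card ≤ (subSums f (s.erase a)).card + 1) :
    ∀ a ∈ s, ∀ b ∈ s, f a = f b := by
  set σ := ∑ i ∈ s, f i with hσ
  have hσmem : σ ∈ subSums f s := mem_subSums.2 ⟨s, subset_rfl, rfl⟩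
  have hD : ∀ a ∈ s, subSums f (s.erase a) = (subSums f s).erase σ := by
    intro a ha
    refine Finset.eq_of_subset_of_card_le ?_ ?_
    · exact Finset.subset_erase.2 ⟨subSums_mono (Finset.erase_subset _ _), total_notMem hs ha⟩
    · rw [Finset.card_erase_of_mem hσmem]
      have := h a ha
      omega
  set D := (subSums f s).erase σ with hDdef
  have hsymm : ∀ a ∈ s, ∀ x ∈ D, σ - f a - x ∈ D := by
    intro a ha x hx
    rw [← hD a ha] at hx ⊢
    have h1 := sub_mem_subSums hx
    have h2 : σ - f a = ∑ i ∈ s.erase a, f i := by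
      rw [hσ, ← Finset.add_sum_erase s f ha]
      abel
    rwa [h2]
  have hper : ∀ a ∈ s, ∀ b ∈ s, ∀ x ∈ D, x + (f a - f b) ∈ D := by
    intro a ha b hb x hx
    have h1 := hsymm b hb _ (hsymm a ha x hx)
    convert h1 using 1
    abel
  intro a ha b hb
  by_contra hne
  -- `σ` is `y + f a` with `y ∈ D`, so its translate by `f a - f b` is a subsequence sum again.
  have hσa : σ - f a ∈ D := by
    rcases mem_subSums_cases a hσmem with h1 | h1
    · exact absurd h1 (total_notMem hs ha)
    · rwa [hD a ha] at h1
  have h2 : σ + (f a - f b) ∈ subSums f s := by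
    have h3 := hper a ha b hb _ hσa
    rw [← hD a ha] at h3
    have h4 := add_mem_subSums ha h3
    convert h4 using 1
    abel
  have h5 : σ + (f a - f b) ∈ D := by
    refine Finset.mem_erase.2 ⟨fun h6 => hne ?_, h2⟩
    rw [add_eq_left] at h6
    exact sub_eq_zero.1 h6
  have h6 := hper b hb a ha _ h5
  have h7 : σ + (f a - f b) + (f b - f a) = σ := by abel
  rw [h7] at h6
  exact absurd h6 (Finset.notMem_erase _ _)

lemma smooth_of_const [Finite G] {f : ι → G} {s : Finset ι} (hs : ZFOn f s) (hne : s.Nonempty)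
    (h : ∀ a ∈ s, ∀ b ∈ s, f a = f b) : SmoothOn f s := by
  obtain ⟨a, ha⟩ := hne
  have hk : ∀ k ≤ s.card, ∃ t ⊆ s, t.card = k := fun k hk => Finset.exists_subset_card_eq hk
  refine ⟨f a, fun _ => 1, fun i hi => ⟨le_rfl, by rw [one_smul, h i hi a ha]⟩, ?_, ?_⟩
  · by_contra hlt
    simp only [Finset.sum_const, smul_eq_mul, mul_one, not_lt] at hlt
    obtain ⟨t, ht, htc⟩ := hk _ hlt
    have hpos := addOrderOf_pos (f a)
    refine hs t ht (Finset.card_pos.1 (by omega)) ?_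
    rw [Finset.sum_congr rfl (fun i hi => h i (ht hi) a ha), Finset.sum_const, htc,
      addOrderOf_nsmul_eq_zero]
  · simpa using hk

/-- A smooth sequence extended by one term stays smooth, unless the number of subsequence sums
doubles. -/
lemma smooth_insert [DecidableEq ι] [DecidableEq G] {f : ι → G} {s : Finset ι}
    (hs : ZFOn f s) {a : ι} (ha : a ∈ s)
    (hsm : SmoothOn f (s.erase a)) (hcard : (subSums f s).card < 2 * s.card) :
    SmoothOn f s := by
  obtain ⟨g, m, hm, hlt, hk⟩ := hsm
  set M := ∑ i ∈ s.erase a, m i with hM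
  have hsum : ∀ t ⊆ s.erase a, ∑ i ∈ t, f i = (∑ i ∈ t, m i) • g := by
    intro t ht
    rw [Finset.sum_smul]
    exact Finset.sum_congr rfl fun i hi => (hm i (ht hi)).2
  have hmul : ∀ k ≤ M, k • g ∈ subSums f (s.erase a) := by
    intro k hkM
    obtain ⟨t, ht, htk⟩ := hk k hkM
    exact mem_subSums.2 ⟨t, ht, by rw [hsum t ht, htk]⟩
  have hzero : ∀ k ≤ M, k • g + f a ≠ 0 := by
    intro k hkM h0
    obtain ⟨t, ht, htk⟩ := hk k hkM
    have hat : a ∉ t := fun h => by simpa using ht h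
    refine hs (insert a t) (Finset.insert_subset ha (ht.trans (Finset.erase_subset _ _)))
      (Finset.insert_nonempty _ _) ?_
    rw [Finset.sum_insert hat, hsum t ht, htk, add_comm, h0]
  have hMcard : s.card ≤ M + 1 := by
    have h1 : (s.erase a).card ≤ M := by
      rw [Finset.card_eq_sum_ones]
      exact Finset.sum_le_sum fun i hi => (hm i hi).1
    rw [Finset.card_erase_of_mem ha] at h1
    omega
  by_cases hx : ∃ x ≤ M, f a = x • g
  · obtain ⟨x, hxM, hfa⟩ := hx
    have hx1 : 1 ≤ x := by
      by_contra h0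
      have : x = 0 := by omega
      apply hzero 0 (Nat.zero_le _)
      simp [hfa, this]
    have hlt' : M + x < addOrderOf g := by
      by_contra hge
      apply hzero (addOrderOf g - x) (by omega)
      rw [hfa, ← add_smul, Nat.sub_add_cancel (by omega), addOrderOf_nsmul_eq_zero]
    have hupd : ∀ t ⊆ s.erase a, ∑ i ∈ t, Function.update m a x i = ∑ i ∈ t, m i := by
      intro t ht
      refine Finset.sum_congr rfl fun i hi => ?_
      rw [Function.update_of_ne (Finset.ne_of_mem_erase (ht hi))]
    have htot : ∑ i ∈ s, Function.update m a x i = M + x := by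
      rw [← Finset.add_sum_erase s _ ha, hupd _ subset_rfl, Function.update_self, add_comm]
    refine ⟨g, Function.update m a x, ?_, by rwa [htot], ?_⟩
    · intro i hi
      by_cases hia : i = a
      · subst hia
        rw [Function.update_self]
        exact ⟨hx1, hfa⟩
      · rw [Function.update_of_ne hia]
        exact hm i (Finset.mem_erase.2 ⟨hia, hi⟩)
    · intro k hkle
      rw [htot] at hkle
      by_cases hkM : k ≤ M
      · obtain ⟨t, ht, htk⟩ := hk k hkM
        exact ⟨t, ht.trans (Finset.erase_subset _ _), by rw [hupd t ht, htk]⟩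
      · obtain ⟨t, ht, htk⟩ := hk (k - x) (by omega)
        have hat : a ∉ t := fun h => by simpa using ht h
        refine ⟨insert a t, Finset.insert_subset ha (ht.trans (Finset.erase_subset _ _)), ?_⟩
        rw [Finset.sum_insert hat, hupd t ht, htk, Function.update_self]
        omega
  · exfalso
    push Not at hx
    have hinj : Set.InjOn (fun k : ℕ => k • g) (Finset.range (M + 1)) := by
      intro i hi j hj hij
      simp only [Finset.coe_range, Set.mem_Iio] at hi hj
      exact nsmul_injOn_Iio_addOrderOf (Set.mem_Iio.2 (by omega)) (Set.mem_Iio.2 (by omega)) hij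
    set C := (Finset.range (M + 1)).image fun k : ℕ => k • g with hC
    have hCcard : C.card = M + 1 := by rw [hC, Finset.card_image_of_injOn hinj, Finset.card_range]
    have hdisj : Disjoint C (C.image (· + f a)) := by
      rw [Finset.disjoint_left]
      intro y hy hy'
      simp only [hC, Finset.mem_image, Finset.mem_range] at hy hy'
      obtain ⟨j, hj, rfl⟩ := hy
      obtain ⟨_, ⟨k, hk', rfl⟩, hjk⟩ := hy'
      rcases le_total k j with hle | hle
      · apply hx (j - k) (by omega)
        rw [← add_right_inj (k • g), hjk, ← add_smul]
        congr 1
        omega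
      · apply hzero (k - j) (by omega)
        rw [← add_right_inj (j • g), ← add_assoc, ← add_smul, add_zero, ← hjk]
        congr 2
        omega
    have hsub : C ∪ C.image (· + f a) ⊆ subSums f s := by
      intro y hy
      have hC' : ∀ z ∈ C, z ∈ subSums f (s.erase a) := by
        intro z hz
        simp only [hC, Finset.mem_image, Finset.mem_range] at hz
        obtain ⟨k, hk', rfl⟩ := hz
        exact hmul k (by omega)
      rcases Finset.mem_union.1 hy with hy | hy
      · exact subSums_mono (Finset.erase_subset _ _) (hC' y hy)
      · obtain ⟨z, hz, rfl⟩ := Finset.mem_image.1 hy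
        exact add_mem_subSums ha (hC' z hz)
    have h1 := Finset.card_le_card hsub
    rw [Finset.card_union_of_disjoint hdisj,
      Finset.card_image_of_injective _ (add_left_injective _), hCcard] at h1
    omega

/-- A zero-sum free sequence with few subsequence sums is smooth. -/
lemma smooth_of_card_lt [DecidableEq ι] [DecidableEq G] [Finite G] {f : ι → G} {s : Finset ι}
    (hs : ZFOn f s) (hcard : (subSums f s).card < 2 * s.card) : SmoothOn f s := by
  induction hc : s.card generalizing s with
  | zero => omega
  | succ c ih =>
    by_cases h : ∃ a ∈ s, (subSums f (s.erase a)).card < 2 * (s.erase a).card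
    · obtain ⟨a, ha, hlt⟩ := h
      refine smooth_insert hs ha (ih ?_ hlt ?_) hcard
      · exact fun t ht => hs t (ht.trans (Finset.erase_subset _ _))
      · rw [Finset.card_erase_of_mem ha]
        omega
    · push Not at h
      refine smooth_of_const hs (Finset.card_pos.1 (by omega)) (const_of_card hs ?_)
      intro a ha
      have h1 := h a ha
      rw [Finset.card_erase_of_mem ha] at h1
      omega

end SavchevChen

lemma exists_signedSmooth {n ℓ : ℕ} (hn : 0 < n) (T : Fin ℓ → ZMod n) (hℓ : n / 2 + 1 ≤ ℓ)
    (hT : ZeroSumFree T) : ∃ g : ZMod n, addOrderOf g = n ∧ IsSignedGSmooth g T := by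
  have : NeZero n := ⟨hn.ne'⟩
  have hcard : (subSums T Finset.univ).card < 2 * (Finset.univ : Finset (Fin ℓ)).card := by
    have h1 := Finset.card_le_univ (subSums T Finset.univ)
    rw [ZMod.card] at h1
    rw [Finset.card_univ, Fintype.card_fin]
    omega
  obtain ⟨g, m, hm, hlt, hk⟩ := smooth_of_card_lt (fun t _ => hT t) hcard
  have hm1 : ∀ i, 1 ≤ m i := fun i => (hm i (Finset.mem_univ i)).1
  have hle : ℓ ≤ ∑ i, m i := by
    calc ℓ = ∑ _i : Fin ℓ, 1 := by simp
      _ ≤ ∑ i, m i := Finset.sum_le_sum fun i _ => hm1 i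
  have hord : addOrderOf g = n := by
    have hdvd : addOrderOf g ∣ n := by
      have := addOrderOf_dvd_card (x := g)
      rwa [ZMod.card] at this
    obtain ⟨c, hc⟩ := hdvd
    have h2 : n < 2 * addOrderOf g := by omega
    have hc2 : c < 2 := by
      by_contra hge
      have := Nat.mul_le_mul_left (addOrderOf g) (not_lt.1 hge)
      omega
    interval_cases c <;> omega
  refine ⟨g, hord, fun _ => 1, fun _ => Or.inl rfl, fun i => (m i : ℤ), ?_, ?_, ?_, ?_⟩
  · intro i
    dsimp only
    exact_mod_cast hm1 i
  · intro i
    simpa using (hm i (Finset.mem_univ i)).2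
  · rw [hord] at hlt
    dsimp only
    exact_mod_cast hlt
  · ext x
    simp only [Set.mem_ofPred_eq, Set.mem_Icc]
    constructor
    · rintro ⟨S, ⟨i, hi⟩, rfl⟩
      have h1 : m i ≤ ∑ i ∈ S, m i := Finset.single_le_sum (fun _ _ => Nat.zero_le _) hi
      have h2 : ∑ i ∈ S, m i ≤ ∑ i, m i :=
        Finset.sum_le_sum_of_subset (Finset.subset_univ S)
      have h3 := hm1 i
      exact ⟨by exact_mod_cast h3.trans h1, by exact_mod_cast h2⟩
    · rintro ⟨h1, h2⟩
      lift x to ℕ using by omega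
      obtain ⟨t, -, ht⟩ := hk x (by exact_mod_cast h2)
      refine ⟨t, ?_, by exact_mod_cast ht⟩
      rw [Finset.nonempty_iff_ne_empty]
      rintro rfl
      simp at ht
      omega

/-! ### Sequences of length `⌊n/2⌋` that are not signed smooth -/

/-- What is used of a signed smooth representation: positive coefficients of sum less than `n`,
one of which is `1`. -/
lemma signed_data {n ℓ : ℕ} (hℓ : 0 < ℓ) {g : ZMod n} {T : Fin ℓ → ZMod n}
    (h : IsSignedGSmooth g T) :
    ∃ m : Fin ℓ → ℤ, (∀ i, 1 ≤ m i) ∧ (∀ i, T i = m i • g ∨ T i = -(m i • g)) ∧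
      ∑ i, m i < n ∧ ∃ j, m j = 1 := by
  obtain ⟨ε, hε, m, hm1, hmT, hlt, hsm⟩ := h
  refine ⟨m, hm1, fun i => ?_, hlt, ?_⟩
  · have := hmT i
    rcases hε i with h | h <;> simp only [h] at this
    · left
      simpa using this
    · right
      rw [← this]
      simp
  · have h1 : (1 : ℤ) ∈ Set.Icc 1 (∑ i, m i) := by
      refine ⟨le_rfl, (hm1 ⟨0, hℓ⟩).trans ?_⟩
      exact Finset.single_le_sum (f := m) (fun i _ => by linarith [hm1 i]) (Finset.mem_univ _)
    rw [← hsm] at h1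
    obtain ⟨S, ⟨i, hi⟩, hS⟩ := h1
    refine ⟨i, le_antisymm ?_ (hm1 i)⟩
    rw [← hS]
    exact Finset.single_le_sum (f := m) (fun i _ => by linarith [hm1 i]) hi

/-- The sequence `p, q, r, r, …` of natural numbers. -/
def seq3 (p q r : ℕ) (i : ℕ) : ℕ := if i = 0 then p else if i = 1 then q else r

/-- A subsequence sum of `seq3` in terms of the indicators `a`, `b` of its first two terms and
the number `c` of the other ones. -/
lemma seq3_sum (p q r : ℕ) {k : ℕ} (hk : 2 ≤ k) (S : Finset (Fin k)) (hS : S.Nonempty) :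
    ∃ a b c : ℕ, a ≤ 1 ∧ b ≤ 1 ∧ c + 2 ≤ k ∧ 0 < a + b + c ∧
      ∑ i ∈ S, seq3 p q r i = a * p + b * q + c * r := by
  obtain ⟨l, rfl⟩ : ∃ l, k = l + 2 := ⟨k - 2, by omega⟩
  refine ⟨if 0 ∈ S then 1 else 0, if 1 ∈ S then 1 else 0,
    (Finset.univ.filter fun i : Fin l => i.succ.succ ∈ S).card, ?_, ?_, ?_, ?_, ?_⟩
  · split_ifs <;> simp
  · split_ifs <;> simp
  · have := Finset.card_filter_le (Finset.univ : Finset (Fin l)) (fun i => i.succ.succ ∈ S)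
    simpa using this
  · obtain ⟨i, hi⟩ := hS
    refine Fin.cases (fun hi => ?_) (fun i => Fin.cases (fun hi => ?_) (fun i hi => ?_) i) i hi
    · simp [hi]
    · simp only [Fin.succ_zero_eq_one] at hi
      simp [hi]
    · have : 0 < (Finset.univ.filter fun i : Fin l => i.succ.succ ∈ S).card :=
        Finset.card_pos.2 ⟨i, by simpa using hi⟩
      omega
  · have h : ∑ i ∈ S, seq3 p q r i = ∑ i, if i ∈ S then seq3 p q r i else 0 := by simp
    rw [h, Fin.sum_univ_succ, Fin.sum_univ_succ]
    simp [seq3, ← Finset.sum_filter, add_assoc]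

/-- If `x = ± m g` with `d x = 0` then `n ∣ d m`. -/
lemma dvd_of_mul_eq_zero {n : ℕ} {g x : ZMod n} (hg : addOrderOf g = n) {m d : ℤ}
    (h : x = m • g ∨ x = -(m • g)) (hd : d • x = 0) : (n : ℤ) ∣ d * m := by
  rw [← hg, addOrderOf_dvd_iff_zsmul_eq_zero, mul_smul]
  rcases h with rfl | rfl
  · exact hd
  · simpa using hd

/-- If `x = ± m g` and `y = ± g` then `x = ± m y`, read as a divisibility between integers. -/
lemma dvd_of_unit {n : ℕ} {g : ZMod n} {x y m : ℤ}
    (hx : (x : ZMod n) = m • g ∨ (x : ZMod n) = -(m • g))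
    (hy : (y : ZMod n) = (1 : ℤ) • g ∨ (y : ZMod n) = -((1 : ℤ) • g)) :
    (n : ℤ) ∣ m * y - x ∨ (n : ℤ) ∣ m * y + x := by
  rw [one_smul] at hy
  simp only [← ZMod.intCast_zmod_eq_zero_iff_dvd] at *
  rw [zsmul_eq_mul] at hx
  push_cast
  rcases hx with hx | hx <;> rcases hy with hy | hy <;> rw [hx, hy]
  · left; ring
  · right; ring
  · right; ring
  · left; ring

lemma seq3_zeroSumFree {n p q r k : ℕ} (hk : 2 ≤ k)
    (h : ∀ a b c : ℕ, a ≤ 1 → b ≤ 1 → c + 2 ≤ k → 0 < a + b + c → ¬ n ∣ a * p + b * q + c * r) :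
    ZeroSumFree (fun i : Fin k => ((seq3 p q r i : ℤ) : ZMod n)) := by
  intro S hS h0
  obtain ⟨a, b, c, ha, hb, hc, hpos, hsum⟩ := seq3_sum p q r hk S hS
  apply h a b c ha hb hc hpos
  rw [← hsum, ← ZMod.natCast_eq_zero_iff]
  push_cast at h0 ⊢
  exact h0

/-- Lower bounds `u, v, w, w, …` for the coefficients bound their sum. -/
lemma seq3_le_sum {k : ℕ} (hk : 2 ≤ k) {m : Fin k → ℤ} {u v w : ℕ}
    (h : ∀ i : Fin k, (seq3 u v w i : ℤ) ≤ m i) : (u + v + (k - 2) * w : ℤ) ≤ ∑ i, m i := by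
  obtain ⟨l, rfl⟩ : ∃ l, k = l + 2 := ⟨k - 2, by omega⟩
  refine le_trans (le_of_eq ?_) (Finset.sum_le_sum fun i _ => h i)
  rw [Fin.sum_univ_succ, Fin.sum_univ_succ]
  simp [seq3, add_assoc]

lemma exists_even (k : ℕ) (hk : 3 ≤ k) : ∃ T : Fin k → ZMod (2 * k), ZeroSumFree T ∧
    ∀ g : ZMod (2 * k), addOrderOf g = 2 * k → ¬ IsSignedGSmooth g T := by
  refine ⟨_, seq3_zeroSumFree (p := k) (q := k + 1) (r := 1) (by omega) ?_, ?_⟩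
  · rintro a b c ha hb hc hpos ⟨d, hd⟩
    have hd2 : d < 2 := by
      by_contra hge
      have h1 := Nat.mul_le_mul_left (2 * k) (not_lt.1 hge)
      interval_cases a <;> interval_cases b <;> omega
    interval_cases d <;> interval_cases a <;> interval_cases b <;> omega
  · intro g hg hs
    obtain ⟨m, hm1, hmT, hlt, -⟩ := signed_data (by omega) hs
    -- `k` has order two, so its coefficient is a multiple of `k`; the others must then be `1`.
    have h0 : (k : ℤ) ≤ m ⟨0, by omega⟩ := by
      have h1 := dvd_of_mul_eq_zero hg (hmT ⟨0, by omega⟩) (d := 2) (by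
        have : ((2 * k : ℕ) : ZMod (2 * k)) = 0 := ZMod.natCast_self _
        push_cast at this
        simpa [seq3] using this)
      have h2 : (k : ℤ) ∣ m ⟨0, by omega⟩ := by
        push_cast at h1
        exact (mul_dvd_mul_iff_left two_ne_zero).1 h1
      exact Int.le_of_dvd (by linarith [hm1 ⟨0, by omega⟩]) h2
    have hone : ∀ j : Fin k, j.1 ≠ 0 → m j = 1 := by
      intro j hj
      have h1 : ∑ i, (m i - 1) ≥ (m ⟨0, by omega⟩ - 1) + (m j - 1) := by
        rw [← Finset.sum_pair (f := fun i => m i - 1) (a := ⟨0, by omega⟩) (b := j)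
          (fun h => hj (by rw [← h]))]
        exact Finset.sum_le_univ_sum_of_nonneg (fun i => by linarith [hm1 i])
      rw [Finset.sum_sub_distrib] at h1
      simp only [Finset.sum_const, Finset.card_univ, Fintype.card_fin, nsmul_eq_mul, mul_one] at h1
      push_cast at hlt
      linarith [hm1 j]
    have h1 := hmT ⟨1, by omega⟩
    have h2 := hmT ⟨2, by omega⟩
    rw [hone _ (by simp)] at h1 h2
    rcases dvd_of_unit h1 h2 with h | h
    · have := Int.le_of_dvd (by simp [seq3]; omega) ((dvd_neg).2 h)
      simp [seq3] at this
      omega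
    · have := Int.le_of_dvd (by simp [seq3]; omega) h
      simp [seq3] at this
      omega

lemma exists_odd (k : ℕ) (hk : 5 ≤ k) : ∃ T : Fin k → ZMod (2 * k + 1), ZeroSumFree T ∧
    ∀ g : ZMod (2 * k + 1), addOrderOf g = 2 * k + 1 → ¬ IsSignedGSmooth g T := by
  refine ⟨_, seq3_zeroSumFree (p := 3) (q := 3) (r := 2) (by omega) ?_, ?_⟩
  · rintro a b c ha hb hc hpos ⟨d, hd⟩
    have hd2 : d < 2 := by
      by_contra hge
      have h1 := Nat.mul_le_mul_left (2 * k + 1) (not_lt.1 hge)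
      omega
    interval_cases d <;> omega
  · intro g hg hs
    obtain ⟨m, hm1, hmT, hlt, j, hj⟩ := signed_data (by omega) hs
    have hjT := hmT j
    rw [hj] at hjT
    have hT : ∀ i : Fin k, (i.1 < 2 ∧ seq3 3 3 2 i = 3) ∨ (2 ≤ i.1 ∧ seq3 3 3 2 i = 2) := by
      intro i
      unfold seq3
      split_ifs <;> omega
    push_cast at hlt
    rcases hT j with ⟨-, hj3⟩ | ⟨-, hj2⟩
    · -- `g = ± 3`, and `2 = ± 3 m` forces `m ≥ 3`.
      have h := seq3_le_sum (by omega) (m := m) (u := 1) (v := 1) (w := 3) fun i => by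
        rcases hT i with ⟨hi, -⟩ | ⟨hi, hi2⟩
        · have := hm1 i
          unfold seq3
          split_ifs <;> simp <;> omega
        · have h3 := dvd_of_unit (hmT i) hjT
          rw [hi2, hj3] at h3
          have := hm1 i
          have h4 : (3 : ℤ) ≤ m i := by
            rcases h3 with h3 | h3
            · have := Int.le_of_dvd (by push_cast; omega) h3
              push_cast at this
              omega
            · have := Int.le_of_dvd (by push_cast; omega) h3
              push_cast at this
              omega
          unfold seq3
          split_ifs <;> simp <;> omega
      push_cast at h
      linarith
    · -- `g = ± 2`, and `3 = ± 2 m` forces `m ≥ k - 1`.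
      have h := seq3_le_sum (by omega) (m := m) (u := k - 1) (v := k - 1) (w := 1) fun i => by
        have := hm1 i
        rcases hT i with ⟨hi, hi3⟩ | ⟨hi, -⟩
        · have h3 := dvd_of_unit (hmT i) hjT
          rw [hi3, hj2] at h3
          have h4 : (k : ℤ) - 1 ≤ m i := by
            rcases h3 with h3 | h3
            · by_cases h5 : m i = 1
              · have := Int.le_of_dvd (by push_cast; omega) ((dvd_neg).2 h3)
                push_cast at this
                omega
              · have := Int.le_of_dvd (by push_cast; omega) h3
                push_cast at this
                omega
            · have := Int.le_of_dvd (by push_cast; omega) h3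
              push_cast at this
              omega
          unfold seq3
          split_ifs <;> omega
        · unfold seq3
          split_ifs <;> simp <;> omega
      push_cast [Nat.cast_sub (show 1 ≤ k by omega)] at h
      linarith

lemma exists_nine : ∃ T : Fin 4 → ZMod 9, ZeroSumFree T ∧
    ∀ g : ZMod 9, addOrderOf g = 9 → ¬ IsSignedGSmooth g T := by
  refine ⟨![3, 3, 1, 4], by unfold ZeroSumFree; decide, ?_⟩
  intro g hg hs
  obtain ⟨m, hm1, hmT, hlt, -⟩ := signed_data (by omega) hs
  have h0 := dvd_of_mul_eq_zero hg (hmT 0) (d := 3) (by decide)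
  have h1 := dvd_of_mul_eq_zero hg (hmT 1) (d := 3) (by decide)
  rw [Fin.sum_univ_four] at hlt
  have := hm1 0
  have := hm1 1
  have := hm1 2
  have := hm1 3
  -- The two terms `3` have coefficients at least `3`, which leaves `1` for the other two.
  have e2 : m 2 = 1 := by push_cast at *; omega
  have e3 : m 3 = 1 := by push_cast at *; omega
  have h2 := hmT 2
  have h3 := hmT 3
  rw [e2] at h2
  rw [e3] at h3
  have hd := dvd_of_unit (x := 4) (y := 1) (m := 1) (g := g) (by simpa using h3) (by simpa using h2)
  norm_num at hd

theorem stmt12 (n : ℕ) (hn : n = 6 ∨ 8 ≤ n) :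
    (∀ (ℓ : ℕ) (T : Fin ℓ → ZMod n), n / 2 + 1 ≤ ℓ → ZeroSumFree T →
      ∃ g : ZMod n, addOrderOf g = n ∧ IsSignedGSmooth g T) ∧
    (∃ T : Fin (n / 2) → ZMod n, ZeroSumFree T ∧
      ∀ g : ZMod n, addOrderOf g = n → ¬ IsSignedGSmooth g T) := by
  refine ⟨fun ℓ T hℓ hT => exists_signedSmooth (by omega) T hℓ hT, ?_⟩
  obtain ⟨k, rfl | rfl⟩ : ∃ k, n = 2 * k ∨ n = 2 * k + 1 := ⟨n / 2, by omega⟩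
  · rw [show 2 * k / 2 = k by omega]
    exact exists_even k (by omega)
  · rw [show (2 * k + 1) / 2 = k by omega]
    rcases (show k = 4 ∨ 5 ≤ k by omega) with rfl | hk
    · exact exists_nine
    · exact exists_odd k hk
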